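/- Bound on expected privacy loss under pure DP: if μ and ν are probability measures on Y with mutually bounded densities satisfying e^{−ε} ≤ (dμ/dν)(y) ≤ e^{ε} for all y, then ∫ log(dμ/dν) dμ ≤ ε²/2 — i.e., the KL divergence KL(μ‖ν) ≤ ε²/2. -/

import Mathlib

open MeasureTheory Real

/-- Bound on expected privacy loss under pure DP: if `μ, ν` are probability measures with
`μ ≪ ν`, `ν ≪ μ`, and `e^{-ε} ≤ dμ/dν ≤ e^ε` (`ν`-a.e.), then
`KL(μ‖ν) = ∫ log (dμ/dν) dμ ≤ ε² / 2`. -/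
theorem kl_le_of_bounded_rnDeriv {Y : Type*} [MeasurableSpace Y] (μ ν : Measure Y)
    [IsProbabilityMeasure μ] [IsProbabilityMeasure ν]
    (hμν : μ ≪ ν) (hνμ : ν ≪ μ) (ε : ℝ) (hε : 0 ≤ ε)
    (hbound : ∀ᵐ y ∂ν, Real.exp (-ε) ≤ (μ.rnDeriv ν y).toReal ∧
      (μ.rnDeriv ν y).toReal ≤ Real.exp ε) :
    ∫ y, Real.log ((μ.rnDeriv ν y).toReal) ∂μ ≤ ε ^ 2 / 2 := by
  have hm : Measurable (fun y => Real.log ((μ.rnDeriv ν y).toReal)) :=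
    Real.measurable_log.comp (Measure.measurable_rnDeriv μ ν).ennreal_toReal
  have hI : ∀ᵐ y ∂μ, Real.log ((μ.rnDeriv ν y).toReal) ∈ Set.Icc (-ε) ε := by
    filter_upwards [hμν.ae_le hbound] with y hy
    have h0 : 0 < (μ.rnDeriv ν y).toReal := (Real.exp_pos _).trans_le hy.1
    exact ⟨(Real.le_log_iff_exp_le h0).2 hy.1, (Real.log_le_iff_le_exp h0).2 hy.2⟩
  have hS := (ProbabilityTheory.hasSubgaussianMGF_of_mem_Icc hm.aemeasurable hI).mgf_le (-1)
  have h1 : ∫ y, Real.exp (-Real.log ((μ.rnDeriv ν y).toReal)) ∂μ = 1 := by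
    rw [← integral_rnDeriv_smul hμν]
    have : ∀ᵐ y ∂ν, (μ.rnDeriv ν y).toReal •
        Real.exp (-Real.log ((μ.rnDeriv ν y).toReal)) = 1 := by
      filter_upwards [hbound] with y hy
      have h0 : 0 < (μ.rnDeriv ν y).toReal := (Real.exp_pos _).trans_le hy.1
      rw [Real.exp_neg, Real.exp_log h0, smul_eq_mul, mul_inv_cancel₀ h0.ne']
    rw [integral_congr_ae this]
    simp
  set m := ∫ y, Real.log ((μ.rnDeriv ν y).toReal) ∂μ with hmdef
  have h2 : ProbabilityTheory.mgf (fun y => Real.log ((μ.rnDeriv ν y).toReal) - m) μ (-1)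
      = Real.exp m := by
    unfold ProbabilityTheory.mgf
    have : ∀ y, Real.exp (-1 * (Real.log ((μ.rnDeriv ν y).toReal) - m))
        = Real.exp m * Real.exp (-Real.log ((μ.rnDeriv ν y).toReal)) := by
      intro y
      rw [← Real.exp_add]
      congr 1
      ring
    simp_rw [this]
    rw [integral_const_mul, h1, mul_one]
  rw [h2, Real.exp_le_exp] at hS
  refine hS.trans (le_of_eq ?_)
  have h3 : ‖ε - -ε‖ = 2 * ε := by
    rw [Real.norm_of_nonneg (by linarith)]; ring
  push_cast
  rw [h3]
  ring
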